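/- arXiv:1503.06390 — 2 statements merged into one kernel-verified Lean document; each statement's English description precedes it below -/
import Mathlib

section
/- Let A be a unital C*-algebra, B ⊆ A a unital C*-subalgebra, X a selfadjoint element of A, a₀ a selfadjoint element of B, and η : A → B a continuous positive linear map. If b, w ∈ B have strictly positive imaginary parts and satisfy the subordination equation w = b + a₀ + η((X − w)⁻¹), then Im w = Im b + η(((X − Re w)(Im w)⁻¹(X − Re w) + Im w)⁻¹). Consequently, if w₁, w₂ ∈ B have strictly positive imaginary parts and satisfy the subordination equation at points b₁, b₂ ∈ B with strictly positive imaginary parts such that Im b₁ = Im b₂ and Re w₁ = Re w₂, then Im w₁ = Im w₂; that is, the set of pairs (Re w, Im w) arising from such solutions with fixed Im b = q is the graph of a function. -/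
noncomputable section

open Filter Topology
open scoped ComplexOrder

/-- The real part `(b + b*)/2` of an element of a complex star algebra. -/
def reP {A : Type*} [NonUnitalRing A] [StarRing A] [Module ℂ A] (b : A) : A :=
  (2 : ℂ)⁻¹ • (b + star b)

/-- The imaginary part `(b - b*)/(2i)` of an element of a complex star algebra. -/
def imP {A : Type*} [NonUnitalRing A] [StarRing A] [Module ℂ A] (b : A) : A :=
  (2 * Complex.I)⁻¹ • (b - star b)

/-- An element of a C*-algebra is strictly positive if it is selfadjoint, positive
(with respect to the canonical order coming from the star-ordered ring structure)
and invertible. -/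
def SPos {A : Type*} [Ring A] [StarRing A] [PartialOrder A] (v : A) : Prop :=
  IsSelfAdjoint v ∧ 0 ≤ v ∧ IsUnit v

open scoped Ring
open Complex

/-!
Write `w = x + i v`, `Y = X - ι x` and `z = Y - i ι v`. From `Im z⁻¹ = -z⁻¹ (Im z) (z*)⁻¹` and
`z* (ι v)⁻¹ z = Y (ι v)⁻¹ Y + ι v`, the imaginary part of the subordination equation is the equation
`v = q + Ψ v`, where `q = Im b` and `Ψ v = η ((Y (ι v)⁻¹ Y + ι v)⁻¹)`. Each ingredient of `Ψ`, that
is, positive linear maps, inversion, conjugation and sums, does not increase Thompson's metric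
`d(v, v') = log inf {t ≥ 1 | v ≤ t v' and v' ≤ t v}` on strictly positive elements, and adding the
strictly positive `q` strictly decreases it. Hence `v` is determined by `q` and `x`.
-/

section ImaginaryPart

variable {A : Type*}

section NonUnital

variable [NonUnitalRing A] [StarRing A] [Module ℂ A]

lemma map_imP {B F : Type*} [NonUnitalRing B] [StarRing B] [Module ℂ B] [FunLike F A B]
    [LinearMapClass F ℂ A B] [StarHomClass F A B] (f : F) (x : A) : f (imP x) = imP (f x) := by
  rw [imP, imP, map_smul, map_sub, map_star]

variable [StarModule ℂ A]

lemma reP_eq_realPart (x : A) : reP x = realPart x := by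
  rw [reP, realPart_apply_coe, ← Complex.coe_smul]
  norm_num

lemma imP_eq_imaginaryPart (x : A) : imP x = imaginaryPart x := by
  rw [imP, imaginaryPart_apply_coe, ← Complex.coe_smul, smul_smul, mul_inv, inv_I, mul_comm]
  norm_num

lemma isSelfAdjoint_reP (x : A) : IsSelfAdjoint (reP x) :=
  reP_eq_realPart x ▸ (realPart x).2

lemma reP_add_I_smul_imP (x : A) : reP x + I • imP x = x := by
  rw [reP_eq_realPart, imP_eq_imaginaryPart, realPart_add_I_smul_imaginaryPart]

lemma imP_add (x y : A) : imP (x + y) = imP x + imP y := by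
  simp only [imP_eq_imaginaryPart, map_add, AddSubgroup.coe_add]

lemma imP_eq_zero_of_isSelfAdjoint {x : A} (hx : IsSelfAdjoint x) : imP x = 0 := by
  rw [imP_eq_imaginaryPart, hx.imaginaryPart, ZeroMemClass.coe_zero]

lemma imP_sub_I_smul {x y : A} (hx : IsSelfAdjoint x) (hy : IsSelfAdjoint y) :
    imP (x - I • y) = -y := by
  simp [imP_eq_imaginaryPart, hx.imaginaryPart, hy.coe_realPart]

end NonUnital

lemma imP_ringInverse [Ring A] [StarRing A] [Algebra ℂ A] (z : A) :
    imP z⁻¹ʳ = -(z⁻¹ʳ * imP z * (star z)⁻¹ʳ) := by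
  rw [imP, ← Ring.inverse_star, Ring.inverse_sub_inverse isUnit_star.symm, imP, mul_smul_comm,
    smul_mul_assoc, ← smul_neg, ← neg_mul, ← mul_neg, neg_sub]

end ImaginaryPart

section Resolvent

lemma sub_smul_mul_ringInverse_mul_add_smul {R A : Type*} [CommRing R] [Ring A] [Algebra R A]
    (c : R) (Y : A) {v : A} (hv : IsUnit v) :
    (Y - c • v) * v⁻¹ʳ * (Y + c • v) = Y * v⁻¹ʳ * Y - c ^ 2 • v := by
  have expand : (Y - c • v) * v⁻¹ʳ * (Y + c • v) =
      Y * v⁻¹ʳ * Y + c • (Y * (v⁻¹ʳ * v)) - c • (v * v⁻¹ʳ * Y) - (c * c) • (v * v⁻¹ʳ * v) := by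
    simp only [sub_mul, mul_add, smul_mul_assoc, mul_smul_comm, mul_assoc]
    module
  rw [expand, Ring.inverse_mul_cancel v hv, Ring.mul_inverse_cancel v hv, mul_one, one_mul, one_mul,
    add_sub_cancel_right, sq]

section ComplexAlgebra

variable {A : Type*} [Ring A] [Algebra ℂ A]

lemma sub_I_smul_mul_ringInverse_mul_add_I_smul (Y : A) {v : A} (hv : IsUnit v) :
    (Y - I • v) * v⁻¹ʳ * (Y + I • v) = Y * v⁻¹ʳ * Y + v := by
  rw [sub_smul_mul_ringInverse_mul_add_smul I Y hv, I_sq, neg_one_smul, sub_neg_eq_add]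

lemma add_I_smul_mul_ringInverse_mul_sub_I_smul (Y : A) {v : A} (hv : IsUnit v) :
    (Y + I • v) * v⁻¹ʳ * (Y - I • v) = Y * v⁻¹ʳ * Y + v := by
  simpa [← sub_eq_add_neg] using sub_smul_mul_ringInverse_mul_add_smul (-I) Y hv

lemma isUnit_sub_I_smul {Y v : A} (hv : IsUnit v) (h : IsUnit (Y * v⁻¹ʳ * Y + v)) :
    IsUnit (Y - I • v) := by
  refine isUnit_iff_exists_and_exists.2
    ⟨⟨v⁻¹ʳ * (Y + I • v) * (Y * v⁻¹ʳ * Y + v)⁻¹ʳ, ?_⟩,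
      ⟨(Y * v⁻¹ʳ * Y + v)⁻¹ʳ * ((Y + I • v) * v⁻¹ʳ), ?_⟩⟩
  · rw [← mul_assoc, ← mul_assoc, sub_I_smul_mul_ringInverse_mul_add_I_smul Y hv,
      Ring.mul_inverse_cancel _ h]
  · rw [mul_assoc, add_I_smul_mul_ringInverse_mul_sub_I_smul Y hv, Ring.inverse_mul_cancel _ h]

lemma imP_ringInverse_sub_I_smul [StarRing A] [StarModule ℂ A] {Y v : A} (hY : IsSelfAdjoint Y)
    (hv : IsSelfAdjoint v) (hv' : IsUnit v) (h : IsUnit (Y * v⁻¹ʳ * Y + v)) :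
    imP (Y - I • v)⁻¹ʳ = (Y * v⁻¹ʳ * Y + v)⁻¹ʳ := by
  have hz : IsUnit (Y - I • v) := isUnit_sub_I_smul hv' h
  have hstar : star (Y - I • v) = Y + I • v := by
    simp [hY.star_eq, hv.star_eq]
  calc imP (Y - I • v)⁻¹ʳ
      = (Y - I • v)⁻¹ʳ * v * (Y + I • v)⁻¹ʳ := by
        rw [imP_ringInverse, imP_sub_I_smul hY hv, hstar, mul_neg, neg_mul, neg_neg]
    _ = ((Y + I • v) * v⁻¹ʳ * (Y - I • v))⁻¹ʳ := by
        rw [Ring.inverse_mul (.inr hz), Ring.inverse_mul (.inr hv'.ringInverse),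
          Ring.inverse_inverse hv', mul_assoc]
    _ = (Y * v⁻¹ʳ * Y + v)⁻¹ʳ := by rw [add_I_smul_mul_ringInverse_mul_sub_I_smul Y hv']

end ComplexAlgebra

end Resolvent

section Thompson

/-- `ThompsonLE t v w` says that Thompson's metric satisfies `d(v, w) ≤ log t` when `1 ≤ t`. It is
stated without logarithms and for arbitrary `v`, `w`, so that no infimum has to be taken. -/
def ThompsonLE {E : Type*} [LE E] [SMul ℝ E] (t : ℝ) (v w : E) : Prop :=
  v ≤ t • w ∧ w ≤ t • v

namespace ThompsonLE

variable {E : Type*} {t : ℝ}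

lemma map {R F : Type*} [Semiring R] [AddCommMonoid E] [PartialOrder E] [Module R E] [SMul ℝ E]
    [AddCommMonoid F] [PartialOrder F] [Module R F] [SMul ℝ F] [LinearMap.CompatibleSMul E F ℝ R]
    {v w : E} (h : ThompsonLE t v w) (f : E →ₚ[R] F) : ThompsonLE t (f v) (f w) := by
  rw [ThompsonLE, ← f.map_smul_of_tower, ← f.map_smul_of_tower]
  exact ⟨OrderHomClass.mono f h.1, OrderHomClass.mono f h.2⟩

lemma isClosed_setOf [Preorder E] [SMul ℝ E] [TopologicalSpace E] [OrderClosedTopology E]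
    [ContinuousSMul ℝ E] (v w : E) : IsClosed {t : ℝ | ThompsonLE t v w} :=
  (isClosed_le continuous_const (continuous_id.smul continuous_const)).inter
    (isClosed_le continuous_const (continuous_id.smul continuous_const))

section OrderedSpace

variable [AddCommGroup E] [PartialOrder E] [IsOrderedAddMonoid E] [Module ℝ E]

lemma add {v v' w w' : E} (h : ThompsonLE t v w) (h' : ThompsonLE t v' w') :
    ThompsonLE t (v + v') (w + w') := by
  rw [ThompsonLE, smul_add, smul_add]
  exact ⟨add_le_add h.1 h'.1, add_le_add h.2 h'.2⟩

variable [IsOrderedModule ℝ E]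

lemma const_add {q v w : E} {r : ℝ} (hr : 0 < r) (ht : 1 ≤ t) (h : ThompsonLE t v w)
    (hv : q + v ≤ r • q) (hw : q + w ≤ r • q) :
    ThompsonLE (t - r⁻¹ * (t - 1)) (q + v) (q + w) := by
  have le_of_le {x y : E} (hxy : x ≤ t • y) (hy : q + y ≤ r • q) :
      q + x ≤ (t - r⁻¹ * (t - 1)) • (q + y) :=
    calc q + x ≤ q + t • y := by gcongr
      _ = t • (q + y) - (t - 1) • q := by module
      _ ≤ t • (q + y) - (t - 1) • r⁻¹ • (q + y) :=
        sub_le_sub_left (smul_le_smul_of_nonneg_left ((inv_smul_le_iff_of_pos hr).2 hy)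
          (sub_nonneg.2 ht)) _
      _ = (t - r⁻¹ * (t - 1)) • (q + y) := by module
  exact ⟨le_of_le h.1 hw, le_of_le h.2 hv⟩

variable [TopologicalSpace E] [OrderClosedTopology E] [ContinuousSMul ℝ E]

theorem eq_of_eq_const_add {Ψ : E → E} {q v w : E} {r : ℝ}
    (hΨ : ∀ t, 1 ≤ t → ThompsonLE t v w → ThompsonLE t (Ψ v) (Ψ w))
    (hv : v = q + Ψ v) (hw : w = q + Ψ w) (hr : 1 ≤ r) (hvw : ThompsonLE r v w)
    (hvq : v ≤ r • q) (hwq : w ≤ r • q) : v = w := by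
  let S : Set ℝ := Set.Ici 1 ∩ {t | ThompsonLE t v w}
  have hr₀ : 0 < r := one_pos.trans_le hr
  have hSbdd : BddBelow S := ⟨1, fun _ ht => ht.1⟩
  obtain ⟨(ht : 1 ≤ sInf S), htvw⟩ : sInf S ∈ S :=
    (isClosed_Ici.inter (isClosed_setOf v w)).csInf_mem ⟨r, hr, hvw⟩ hSbdd
  set t := sInf S
  have hcontract : t - r⁻¹ * (t - 1) ∈ S := by
    refine ⟨?_, ?_⟩
    · have : r⁻¹ * (t - 1) ≤ t - 1 :=
        mul_le_of_le_one_left (sub_nonneg.2 ht) (inv_le_one_of_one_le₀ hr)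
      exact Set.mem_Ici.2 (by linarith)
    · have := (hΨ t ht htvw).const_add hr₀ ht (hv ▸ hvq) (hw ▸ hwq)
      rwa [← hv, ← hw] at this
  have ht_one : t = 1 := by
    have : r⁻¹ * (t - 1) ≤ 0 := by linarith [csInf_le hSbdd hcontract]
    linarith [nonpos_of_mul_nonpos_right this (inv_pos.2 hr₀)]
  have hone : ThompsonLE 1 v w := ht_one ▸ htvw
  rw [ThompsonLE, one_smul, one_smul] at hone
  exact le_antisymm hone.1 hone.2

end OrderedSpace

end ThompsonLE

end Thompson

lemma SPos.isStrictlyPositive {A : Type*} [Ring A] [StarRing A] [PartialOrder A] {v : A}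
    (hv : SPos v) : IsStrictlyPositive v :=
  hv.2.2.isStrictlyPositive hv.2.1

section CStarAlgebra

lemma ringInverse_smul {𝕜 A : Type*} [Field 𝕜] [Ring A] [Algebra 𝕜 A] {c : 𝕜} (hc : c ≠ 0) (a : A) :
    (c • a)⁻¹ʳ = c⁻¹ • a⁻¹ʳ := by
  have hinv : (algebraMap 𝕜 A c)⁻¹ʳ = algebraMap 𝕜 A c⁻¹ :=
    Ring.inverse_unit (Units.map (algebraMap 𝕜 A).toMonoidHom (Units.mk0 c hc))
  rw [Algebra.smul_def, Algebra.commutes, Ring.inverse_mul (.inr (hc.isUnit.map _)), hinv,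
    ← Algebra.smul_def]

variable {A B : Type*} [CStarAlgebra A] [PartialOrder A] [StarOrderedRing A]
  [CStarAlgebra B] [PartialOrder B] [StarOrderedRing B]

lemma eventually_le_smul {a b : A} (ha : IsStrictlyPositive a) (hb : IsSelfAdjoint b) :
    ∀ᶠ t : ℝ in atTop, b ≤ t • a := by
  nontriviality A
  obtain ⟨r, hr, hra⟩ := (CFC.exists_pos_algebraMap_le_iff ha.isSelfAdjoint).2
    fun x hx => ha.spectrum_pos hx
  filter_upwards [eventually_ge_atTop (‖b‖ / r)] with t ht
  have ht₀ : 0 ≤ t := (by positivity : 0 ≤ ‖b‖ / r).trans ht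
  calc b ≤ algebraMap ℝ A ‖b‖ := hb.le_algebraMap_norm_self
    _ ≤ algebraMap ℝ A (t * r) := algebraMap_mono A ((div_le_iff₀ hr).1 ht)
    _ = t • algebraMap ℝ A r := by rw [map_mul, Algebra.smul_def]
    _ ≤ t • a := smul_le_smul_of_nonneg_left hra ht₀

lemma isStrictlyPositive_map {f : A →ₚ[ℂ] B} (hf : IsUnit (f 1)) {a : A}
    (ha : IsStrictlyPositive a) : IsStrictlyPositive (f a) := by
  obtain ⟨t, ht, hta⟩ := ((eventually_gt_atTop 0).and
    (eventually_le_smul ha (.one A))).exists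
  have hf₁ : IsStrictlyPositive (f 1) := hf.isStrictlyPositive (f.map_nonneg zero_le_one)
  have hle : f 1 ≤ t • f a := f.map_smul_of_tower t a ▸ OrderHomClass.mono f hta
  simpa only [inv_smul_smul₀ ht.ne'] using (hf₁.of_le hle).smul (inv_pos.2 ht)

lemma isStrictlyPositive_conjugate_ringInverse_add {Y v : A} (hY : IsSelfAdjoint Y)
    (hv : IsStrictlyPositive v) : IsStrictlyPositive (Y * v⁻¹ʳ * Y + v) :=
  .nonneg_add (hY.conjugate_nonneg hv.ringInverse.nonneg) hv

lemma imP_ringInverse_sub_map {ι : B →ₚ[ℂ] A} (hι : IsUnit (ι 1)) {X : A} (hX : IsSelfAdjoint X)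
    {w : B} (hw : IsStrictlyPositive (imP w)) :
    imP (X - ι w)⁻¹ʳ =
      ((X - ι (reP w)) * (ι (imP w))⁻¹ʳ * (X - ι (reP w)) + ι (imP w))⁻¹ʳ := by
  have hY : IsSelfAdjoint (X - ι (reP w)) := hX.sub ((isSelfAdjoint_reP w).map' ι)
  have hv : IsStrictlyPositive (ι (imP w)) := isStrictlyPositive_map hι hw
  rw [← imP_ringInverse_sub_I_smul hY hv.isSelfAdjoint hv.isUnit
      (isStrictlyPositive_conjugate_ringInverse_add hY hv).isUnit,
    ← map_smul, sub_sub, ← map_add, reP_add_I_smul_imP]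

namespace ThompsonLE

variable {t : ℝ} {v w : A}

lemma conjugate {Y : A} (hY : IsSelfAdjoint Y) (h : ThompsonLE t v w) :
    ThompsonLE t (Y * v * Y) (Y * w * Y) := by
  rw [ThompsonLE, ← smul_mul_assoc, ← mul_smul_comm, ← smul_mul_assoc, ← mul_smul_comm]
  exact ⟨hY.conjugate_le_conjugate h.1, hY.conjugate_le_conjugate h.2⟩

lemma ringInverse (ht : 0 < t) (hv : IsStrictlyPositive v) (hw : IsStrictlyPositive w)
    (h : ThompsonLE t v w) : ThompsonLE t v⁻¹ʳ w⁻¹ʳ := by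
  have inverse_le {x y : A} (hx : IsStrictlyPositive x) (hxy : x ≤ t • y) : y⁻¹ʳ ≤ t • x⁻¹ʳ := by
    rw [← inv_smul_le_iff_of_pos ht, ← ringInverse_smul ht.ne']
    exact CStarAlgebra.ringInverse_le_ringInverse hxy hx
  exact ⟨inverse_le hw h.2, inverse_le hv h.1⟩

lemma ringInverse_conjugate_ringInverse_add {Y : A} (hY : IsSelfAdjoint Y) (ht : 0 < t)
    (hv : IsStrictlyPositive v) (hw : IsStrictlyPositive w) (h : ThompsonLE t v w) :
    ThompsonLE t (Y * v⁻¹ʳ * Y + v)⁻¹ʳ (Y * w⁻¹ʳ * Y + w)⁻¹ʳ :=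
  (((h.ringInverse ht hv hw).conjugate hY).add h).ringInverse ht
    (isStrictlyPositive_conjugate_ringInverse_add hY hv)
    (isStrictlyPositive_conjugate_ringInverse_add hY hw)

theorem eq_of_eq_const_add_of_isStrictlyPositive {Ψ : A → A} {q : A}
    (hΨ : ∀ t, 1 ≤ t → ThompsonLE t v w → ThompsonLE t (Ψ v) (Ψ w))
    (hq : IsStrictlyPositive q) (hv : IsStrictlyPositive v) (hw : IsStrictlyPositive w)
    (hvΨ : v = q + Ψ v) (hwΨ : w = q + Ψ w) : v = w := by
  obtain ⟨r, hr, hvw, hwv, hvq, hwq⟩ := ((eventually_ge_atTop 1).and <|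
    (eventually_le_smul hw hv.isSelfAdjoint).and <|
    (eventually_le_smul hv hw.isSelfAdjoint).and <|
    (eventually_le_smul hq hv.isSelfAdjoint).and
    (eventually_le_smul hq hw.isSelfAdjoint)).exists
  exact eq_of_eq_const_add hΨ hvΨ hwΨ hr ⟨hvw, hwv⟩ hvq hwq

end ThompsonLE

lemma imP_eq_add_map_of_subordination {ι : B →ₚ[ℂ] A} (hι : IsUnit (ι 1)) {X : A}
    (hX : IsSelfAdjoint X) {a₀ : B} (ha₀ : IsSelfAdjoint a₀) (η : A →ₚ[ℂ] B) {b w : B}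
    (hw : IsStrictlyPositive (imP w)) (h : w = b + a₀ + η (X - ι w)⁻¹ʳ) :
    imP w = imP b +
      η ((X - ι (reP w)) * (ι (imP w))⁻¹ʳ * (X - ι (reP w)) + ι (imP w))⁻¹ʳ := by
  rw [← imP_ringInverse_sub_map hι hX hw, map_imP]
  conv_lhs => rw [h, imP_add, imP_add, imP_eq_zero_of_isSelfAdjoint ha₀, add_zero]

theorem subordination_imaginary_part_graph_general
    {ι : B →ₚ[ℂ] A} (hι : IsUnit (ι 1)) {X : A} (hX : IsSelfAdjoint X)
    {a₀ : B} (ha₀ : IsSelfAdjoint a₀) (η : A →ₚ[ℂ] B) :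
    (∀ b w : B, SPos (imP w) → w = b + a₀ + η (X - ι w)⁻¹ʳ →
      imP w = imP b +
        η ((X - ι (reP w)) * (ι (imP w))⁻¹ʳ * (X - ι (reP w)) + ι (imP w))⁻¹ʳ) ∧
    (∀ b₁ b₂ w₁ w₂ : B, SPos (imP b₁) → SPos (imP w₁) → SPos (imP w₂) →
      w₁ = b₁ + a₀ + η (X - ι w₁)⁻¹ʳ → w₂ = b₂ + a₀ + η (X - ι w₂)⁻¹ʳ →
      imP b₁ = imP b₂ → reP w₁ = reP w₂ → imP w₁ = imP w₂) := by
  refine ⟨fun b w hw =>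
    imP_eq_add_map_of_subordination hι hX ha₀ η hw.isStrictlyPositive, ?_⟩
  intro b₁ b₂ w₁ w₂ hb₁ hw₁ hw₂ h₁ h₂ hb hw
  let Y := X - ι (reP w₁)
  let Ψ (v : B) : B := η (Y * (ι v)⁻¹ʳ * Y + ι v)⁻¹ʳ
  have hY : IsSelfAdjoint Y := hX.sub ((isSelfAdjoint_reP w₁).map' ι)
  have hv₁ := hw₁.isStrictlyPositive
  have hv₂ := hw₂.isStrictlyPositive
  have hΨ₁ : imP w₁ = imP b₁ + Ψ (imP w₁) := imP_eq_add_map_of_subordination hι hX ha₀ η hv₁ h₁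
  have hΨ₂ : imP w₂ = imP b₁ + Ψ (imP w₂) := by
    simpa only [hb, hw, Ψ, Y] using imP_eq_add_map_of_subordination hι hX ha₀ η hv₂ h₂
  have hΨ (t : ℝ) (ht : 1 ≤ t) (h : ThompsonLE t (imP w₁) (imP w₂)) :
      ThompsonLE t (Ψ (imP w₁)) (Ψ (imP w₂)) :=
    ((h.map ι).ringInverse_conjugate_ringInverse_add hY (one_pos.trans_le ht)
      (isStrictlyPositive_map hι hv₁) (isStrictlyPositive_map hι hv₂)).map η
  exact ThompsonLE.eq_of_eq_const_add_of_isStrictlyPositive hΨ hb₁.isStrictlyPositive hv₁ hv₂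
    hΨ₁ hΨ₂

end CStarAlgebra

/-- taking imaginary parts in the subordination equation
`w = b + a₀ + η((X − w)⁻¹)` yields
`Im w = Im b + η(((X − Re w)(Im w)⁻¹(X − Re w) + Im w)⁻¹)`; consequently, solutions with
the same `Im b` and the same `Re w` have the same `Im w` (the graph property of
`(Re ω, Im ω)` from Remark 3.2(2)). -/
theorem subordination_imaginary_part_graph
    {A B : Type*} [CStarAlgebra A] [PartialOrder A] [StarOrderedRing A]
    [CStarAlgebra B] [PartialOrder B] [StarOrderedRing B]
    (ι : B →⋆ₐ[ℂ] A) (hι : Function.Injective ι)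
    (X : A) (hX : IsSelfAdjoint X)
    (a₀ : B) (ha₀ : IsSelfAdjoint a₀)
    (η : A →L[ℂ] B) (hη : ∀ a : A, 0 ≤ a → 0 ≤ η a) :
    (∀ b w : B, SPos (imP b) → SPos (imP w) →
      w = b + a₀ + η (Ring.inverse (X - ι w)) →
      imP w = imP b + η (Ring.inverse
        ((X - ι (reP w)) * Ring.inverse (ι (imP w)) * (X - ι (reP w)) + ι (imP w)))) ∧
    (∀ b₁ b₂ w₁ w₂ : B,
      SPos (imP b₁) → SPos (imP b₂) → SPos (imP w₁) → SPos (imP w₂) →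
      w₁ = b₁ + a₀ + η (Ring.inverse (X - ι w₁)) →
      w₂ = b₂ + a₀ + η (Ring.inverse (X - ι w₂)) →
      imP b₁ = imP b₂ → reP w₁ = reP w₂ → imP w₁ = imP w₂) := by
  have h := subordination_imaginary_part_graph_general (ι := .ofClass ι)
    ((map_one ι).symm ▸ isUnit_one) hX ha₀ (.mk₀ η hη)
  exact ⟨fun b w _ => h.1 b w, fun b₁ b₂ w₁ w₂ hb₁ _ => h.2 b₁ b₂ w₁ w₂ hb₁⟩
end
end

section
/- Let A be a unital C*-algebra, B ⊆ A a unital C*-subalgebra, X a selfadjoint element of A, a₀ a selfadjoint element of B, and η : A → B a continuous 2-positive linear map. Let b₁, b₂, w₁, w₂ ∈ B all have strictly positive imaginary parts and satisfy wⱼ = bⱼ + a₀ + η((X − wⱼ)⁻¹) for j = 1, 2. Then the continuous linear operator ΔH : B → B defined by ΔH(c) = c − η((X − w₁)⁻¹ c (X − w₂)⁻¹) is invertible, its spectrum (as an element of the Banach algebra of bounded linear operators on B) is contained in the open disc {z ∈ ℂ : |z − 1| < 1}, and the spectrum of its inverse Δω := (ΔH)⁻¹ is contained in the half-plane {z ∈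 ℂ : Re z > 1/2}. -/
noncomputable section

open Filter Topology
open scoped ComplexOrder

/-!
Put `Rⱼ = (X - wⱼ)⁻¹` and `vⱼ = Im wⱼ`. Since `Im Rⱼ = Rⱼ vⱼ Rⱼ* = Rⱼ* vⱼ Rⱼ`, the imaginary part of
the subordination equation reads `vⱼ - η(Rⱼ vⱼ Rⱼ*) = vⱼ - η(Rⱼ* vⱼ Rⱼ) = Im bⱼ > 0`, so that both
`v₁^{-1/2} η(R₁ v₁ R₁*) v₁^{-1/2}` and `v₂^{-1/2} η(R₂* v₂ R₂) v₂^{-1/2}` have norm less than `1`.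
The Cauchy–Schwarz inequality for 2-positive maps bounds the operator
`c ↦ v₁^{-1/2} η(R₁ v₁^{1/2} c v₂^{1/2} R₂) v₂^{-1/2}` by the geometric mean of these two norms.
It is similar to `1 - ΔH`, whose spectrum therefore lies in the open unit disc. Finally `z ↦ z⁻¹`
maps the disc `|z - 1| < 1` to the half-plane `Re z > 1/2`.
-/

open scoped ComplexStarModule

section Spectrum

lemma spectrum_subset_ball_of_norm_lt_one {𝕜 R : Type*} [NormedField 𝕜] [NormedRing R]
    [NormedAlgebra 𝕜 R] [HasSummableGeomSeries R] {a : R} (ha : ‖a‖ < 1) :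
    spectrum 𝕜 a ⊆ Metric.ball 0 1 := by
  intro z hz
  rw [mem_ball_zero_iff]
  by_contra! h
  have hz0 : z ≠ 0 := norm_pos_iff.mp (one_pos.trans_le h)
  have hsmul : ‖z⁻¹ • a‖ < 1 := by
    rw [norm_smul, norm_inv]
    exact (mul_le_of_le_one_left (norm_nonneg a) (inv_le_one_of_one_le₀ h)).trans_lt ha
  have hunit := (isUnit_one_sub_of_norm_lt_one hsmul).smul (Units.mk0 z hz0)
  refine hz ?_
  rw [spectrum.mem_resolventSet_iff]
  simpa [Units.smul_def, smul_sub, smul_smul, hz0, Algebra.algebraMap_eq_smul_one] using hunit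

lemma spectrum_one_sub_subset_ball {𝕜 R : Type*} [NormedField 𝕜] [Ring R] [Algebra 𝕜 R] {a : R}
    {r : ℝ} (ha : spectrum 𝕜 a ⊆ Metric.ball 0 r) : spectrum 𝕜 (1 - a) ⊆ Metric.ball 1 r := by
  rw [← map_one (algebraMap 𝕜 R), ← spectrum.singleton_sub_eq]
  rintro _ ⟨_, rfl, y, hy, rfl⟩
  simpa using ha hy

lemma half_lt_re_of_inv_mem_ball {z : ℂ} (hz : z⁻¹ ∈ Metric.ball (1 : ℂ) 1) :
    1 / 2 < z.re := by
  have hz0 : z ≠ 0 := by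
    rintro rfl
    simp at hz
  have hlt : ‖1 - z‖ < ‖z‖ := calc
    ‖1 - z‖ = ‖z⁻¹ - 1‖ * ‖z‖ := by rw [← norm_mul, sub_mul, inv_mul_cancel₀ hz0, one_mul]
    _ < 1 * ‖z‖ := mul_lt_mul_of_pos_right (mem_ball_iff_norm.mp hz) (norm_pos_iff.mpr hz0)
    _ = ‖z‖ := one_mul _
  have hsq : ‖1 - z‖ ^ 2 < ‖z‖ ^ 2 := pow_lt_pow_left₀ hlt (norm_nonneg _) two_ne_zero
  simp only [Complex.sq_norm, Complex.normSq_apply, Complex.sub_re, Complex.sub_im,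
    Complex.one_re, Complex.one_im] at hsq
  linarith

lemma isUnit_of_spectrum_subset_ball {𝕜 R : Type*} [NormedField 𝕜] [Ring R] [Algebra 𝕜 R] {a : R}
    (ha : spectrum 𝕜 a ⊆ Metric.ball 1 1) : IsUnit a := by
  rw [← spectrum.zero_notMem_iff 𝕜]
  intro h
  simpa using ha h

lemma spectrum_ringInverse_subset_half_lt_re {R : Type*} [Ring R] [Algebra ℂ R] {a : R}
    (ha : spectrum ℂ a ⊆ Metric.ball 1 1) :
    spectrum ℂ (Ring.inverse a) ⊆ {z : ℂ | 1 / 2 < z.re} := by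
  obtain ⟨u, rfl⟩ := isUnit_of_spectrum_subset_ball ha
  rw [Ring.inverse_unit, ← spectrum.map_inv]
  exact fun z hz ↦ half_lt_re_of_inv_mem_ball (ha hz)

end Spectrum

section ImaginaryPart

lemma imP_eq_imaginaryPart_s5 {R : Type*} [NonUnitalRing R] [StarRing R] [Module ℂ R]
    [StarModule ℂ R] (a : R) : imP a = ℑ a := by
  rw [imP, imaginaryPart_apply_coe, ← Complex.coe_smul, smul_smul, mul_inv, Complex.inv_I]
  push_cast
  rw [mul_comm]

lemma sPos_iff_isStrictlyPositive {R : Type*} [Ring R] [StarRing R] [PartialOrder R]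
    [StarOrderedRing R] {v : R} : SPos v ↔ IsStrictlyPositive v :=
  ⟨fun h ↦ h.2, fun h ↦ ⟨h.isSelfAdjoint, h⟩⟩

variable {R : Type*} [Ring R] [StarRing R] [Algebra ℂ R] [StarModule ℂ R]

lemma imaginaryPart_ringInverse {a : R} (ha : IsUnit a) :
    (ℑ (Ring.inverse a) : R) = -(Ring.inverse a * ℑ a * star (Ring.inverse a)) := by
  obtain ⟨u, rfl⟩ := ha
  have hstar : star (u : R) * star (↑u⁻¹ : R) = 1 := by rw [← star_mul, u.inv_mul, star_one]
  simp only [Ring.inverse_unit, imaginaryPart_apply_coe, mul_smul_comm, smul_mul_assoc, mul_sub,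
    sub_mul, u.inv_mul, one_mul, mul_assoc, hstar, mul_one, ← smul_neg, neg_sub]

lemma imaginaryPart_ringInverse' {a : R} (ha : IsUnit a) :
    (ℑ (Ring.inverse a) : R) = -(star (Ring.inverse a) * ℑ a * Ring.inverse a) := by
  obtain ⟨u, rfl⟩ := ha
  have hstar : star (↑u⁻¹ : R) * star (u : R) = 1 := by rw [← star_mul, u.mul_inv, star_one]
  simp only [Ring.inverse_unit, imaginaryPart_apply_coe, mul_smul_comm, smul_mul_assoc, mul_sub,
    sub_mul, mul_assoc, u.mul_inv, mul_one]
  simp only [← mul_assoc, hstar, one_mul, ← smul_neg, neg_sub]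

end ImaginaryPart

section StrictlyPositive

variable {A : Type*} [CStarAlgebra A] [PartialOrder A] [StarOrderedRing A]

lemma exists_units_star_mul_self_eq {v : A} (hv : IsStrictlyPositive v) :
    ∃ g : Aˣ, star (g : A) * g = v := by
  refine ⟨hv.isUnit_cfcSqrt.unit, ?_⟩
  rw [IsUnit.unit_spec, (IsSelfAdjoint.of_nonneg (CFC.sqrt_nonneg v)).star_eq,
    CFC.sqrt_mul_sqrt_self v hv.nonneg]

lemma isUnit_of_isStrictlyPositive_imaginaryPart {a : A} (ha : IsStrictlyPositive (ℑ a : A)) :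
    IsUnit a := by
  obtain ⟨g, hg⟩ := exists_units_star_mul_self_eq ha
  have hstar : star (g : A) * star (↑g⁻¹ : A) = 1 := by rw [← star_mul, g.inv_mul, star_one]
  let h : A := star (↑g⁻¹ : A) * ℜ a * ↑g⁻¹
  have hh : IsSelfAdjoint h := (ℜ a).2.conjugate' _
  have hunit : IsUnit (h + algebraMap ℂ A Complex.I) := by
    have hI : -Complex.I ∉ spectrum ℂ h := fun hmem ↦ by
      simpa using congrArg Complex.im (hh.mem_spectrum_eq_re hmem)
    rw [spectrum.notMem_iff, IsUnit.sub_iff] at hI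
    simpa using hI
  have hfactor : a = star (g : A) * (h + algebraMap ℂ A Complex.I) * g := calc
    a = ℜ a + Complex.I • (ℑ a : A) := (realPart_add_I_smul_imaginaryPart a).symm
    _ = star (g : A) * h * g + Complex.I • (star (g : A) * g) := by
      simp only [h, ← mul_assoc, hstar, one_mul, Units.inv_mul_cancel_right, hg]
    _ = star (g : A) * (h + algebraMap ℂ A Complex.I) * g := by
      simp only [Algebra.algebraMap_eq_smul_one, mul_add, add_mul, mul_smul_comm, smul_mul_assoc,
        mul_one]
  rw [hfactor]
  exact (g.isUnit.star.mul hunit).mul g.isUnit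

lemma norm_lt_one_of_isStrictlyPositive_one_sub {a : A} (ha : 0 ≤ a)
    (h : IsStrictlyPositive (1 - a)) : ‖a‖ < 1 := by
  nontriviality A
  have hle : ‖a‖ ≤ 1 :=
    (CStarAlgebra.norm_le_one_iff_of_nonneg a).mpr (sub_nonneg.mp h.nonneg)
  refine hle.lt_of_ne fun hone ↦ ?_
  have hmem := CStarAlgebra.norm_mem_spectrum_of_nonneg ha
  rw [hone] at hmem
  refine hmem ?_
  rw [spectrum.mem_resolventSet_iff, map_one]
  exact h.isUnit

lemma norm_star_inv_mul_mul_inv_lt_one {g : Aˣ} {p : A} (hp : 0 ≤ p)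
    (h : IsStrictlyPositive (star (g : A) * g - p)) : ‖star (↑g⁻¹ : A) * p * ↑g⁻¹‖ < 1 := by
  refine norm_lt_one_of_isStrictlyPositive_one_sub (star_left_conjugate_nonneg hp _) ?_
  have hstar : star (↑g⁻¹ : A) * star (g : A) = 1 := by rw [← star_mul, g.mul_inv, star_one]
  have hconj := g⁻¹.isUnit.isStrictlyPositive_star_left_conjugate_iff.mpr h
  rwa [mul_sub, sub_mul, ← mul_assoc, hstar, one_mul, g.mul_inv] at hconj

end StrictlyPositive

lemma norm_sum_star_mul_sq_le {n B : Type*} [Fintype n] [NonUnitalCStarAlgebra B] [PartialOrder B]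
    [StarOrderedRing B] (f g : n → B) :
    ‖∑ i, star (f i) * g i‖ ^ 2 ≤ ‖∑ i, star (f i) * f i‖ * ‖∑ i, star (g i) * g i‖ := by
  -- `⟪x, y⟫ = y * star x` on `B`, so the stars of `f` and `g` are the vectors to pair.
  let x : WithCStarModule B (n → B) := (WithCStarModule.equiv B _).symm (star g)
  let y : WithCStarModule B (n → B) := (WithCStarModule.equiv B _).symm (star f)
  have hxy : inner B x y = ∑ i, star (f i) * g i := by
    simp [x, y, WithCStarModule.pi_inner, WithCStarModule.inner_def]
  have hx : ‖x‖ ^ 2 = ‖∑ i, star (g i) * g i‖ := by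
    simp [x, WithCStarModule.pi_norm_sq, WithCStarModule.inner_def]
  have hy : ‖y‖ ^ 2 = ‖∑ i, star (f i) * f i‖ := by
    simp [y, WithCStarModule.pi_norm_sq, WithCStarModule.inner_def]
  rw [← hxy, ← hx, ← hy, ← mul_pow, mul_comm ‖y‖]
  exact pow_le_pow_left₀ (norm_nonneg _) (CStarModule.norm_inner_le _) 2

/-- A map between star rings is 2-positive if its entrywise extension to `2 × 2` matrices preserves
positivity. Positivity of a matrix `p` is encoded as `∃ y, p = star y * y`, which for matrices
over a C⋆-algebra is the usual notion. -/
def IsTwoPositive {A B : Type*} [NonUnitalSemiring A] [StarRing A] [NonUnitalSemiring B]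
    [StarRing B] (η : A → B) : Prop :=
  ∀ p : Matrix (Fin 2) (Fin 2) A, (∃ y : Matrix (Fin 2) (Fin 2) A, p = star y * y) →
    ∃ z : Matrix (Fin 2) (Fin 2) B, p.map η = star z * z

namespace IsTwoPositive

lemma exists_gram {A B : Type*} [NonUnitalSemiring A] [StarRing A] [NonUnitalSemiring B]
    [StarRing B] {η : A → B} (hη : IsTwoPositive η) (u t : A) :
    ∃ f g : Fin 2 → B, η (u * star u) = ∑ i, star (f i) * f i ∧
      η (u * t) = ∑ i, star (f i) * g i ∧ η (star t * star u) = ∑ i, star (g i) * f i ∧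
      η (star t * t) = ∑ i, star (g i) * g i := by
  obtain ⟨z, hz⟩ := hη _ ⟨!![star u, t; 0, 0], rfl⟩
  have hentry (i j : Fin 2) := congrFun₂ hz i j
  refine ⟨fun i ↦ z i 0, fun i ↦ z i 1, ?_, ?_, ?_, ?_⟩
  · simpa [Matrix.mul_apply, Matrix.star_apply] using hentry 0 0
  · simpa [Matrix.mul_apply, Matrix.star_apply] using hentry 0 1
  · simpa [Matrix.mul_apply, Matrix.star_apply] using hentry 1 0
  · simpa [Matrix.mul_apply, Matrix.star_apply] using hentry 1 1

lemma map_star {A B : Type*} [Semiring A] [StarRing A] [NonUnitalSemiring B] [StarRing B]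
    {η : A → B} (hη : IsTwoPositive η) (t : A) : η (star t) = star (η t) := by
  obtain ⟨f, g, -, hfg, hgf, -⟩ := hη.exists_gram 1 t
  rw [one_mul] at hfg
  rw [star_one, mul_one] at hgf
  simp [hfg, hgf]

lemma map_imaginaryPart {A B : Type*} [Ring A] [StarRing A] [Module ℂ A] [StarModule ℂ A]
    [NonUnitalRing B] [StarRing B] [Module ℂ B] [StarModule ℂ B] {η : A →ₗ[ℂ] B}
    (hη : IsTwoPositive η) (a : A) : η (ℑ a) = ℑ (η a) := by
  simp only [imaginaryPart_apply_coe, ← Complex.coe_smul, map_smul, map_sub, hη.map_star]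

lemma norm_star_mul_apply_mul_sq_le {A B : Type*} [NonUnitalSemiring A] [StarRing A]
    [NonUnitalCStarAlgebra B] [PartialOrder B] [StarOrderedRing B] {η : A → B}
    (hη : IsTwoPositive η) (u t : A) (r s : B) :
    ‖star r * η (u * t) * s‖ ^ 2 ≤
      ‖star r * η (u * star u) * r‖ * ‖star s * η (star t * t) * s‖ := by
  obtain ⟨f, g, hff, hfg, -, hgg⟩ := hη.exists_gram u t
  rw [hff, hfg, hgg]
  simpa only [star_mul, mul_assoc, Finset.mul_sum, Finset.sum_mul] using
    norm_sum_star_mul_sq_le (fun i ↦ f i * r) (fun i ↦ g i * s)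

section Order

variable {A B : Type*} [NonUnitalCStarAlgebra A] [PartialOrder A] [StarOrderedRing A]

lemma map_nonneg [NonUnitalSemiring B] [PartialOrder B] [StarRing B] [StarOrderedRing B]
    {η : A → B} (hη : IsTwoPositive η) {a : A} (ha : 0 ≤ a) : 0 ≤ η a := by
  obtain ⟨t, rfl⟩ := CStarAlgebra.nonneg_iff_eq_star_mul_self.mp ha
  obtain ⟨-, g, -, -, -, hg⟩ := hη.exists_gram 0 t
  rw [hg]
  exact Finset.sum_nonneg fun i _ ↦ star_mul_self_nonneg (g i)

lemma monotone [NonUnitalRing B] [PartialOrder B] [StarRing B] [StarOrderedRing B] [Module ℂ B]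
    {η : A →ₗ[ℂ] B} (hη : IsTwoPositive η) : Monotone η := fun a b hab ↦ by
  rw [← sub_nonneg, ← map_sub]
  exact hη.map_nonneg (sub_nonneg.mpr hab)

lemma continuous [NonUnitalCStarAlgebra B] [PartialOrder B] [StarOrderedRing B]
    {η : A →ₗ[ℂ] B} (hη : IsTwoPositive η) : Continuous η :=
  map_continuous (⟨η, hη.monotone⟩ : A →ₚ[ℂ] B)

end Order

section CStarAlgebra

variable {A B : Type*} [CStarAlgebra A] [PartialOrder A] [StarOrderedRing A]
  [NonUnitalCStarAlgebra B] [PartialOrder B] [StarOrderedRing B] {η : A →ₗ[ℂ] B}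

lemma norm_star_mul_apply_star_mul_self_mul_le (hη : IsTwoPositive η) (a y : A) (s : B) :
    ‖star s * η (star (a * y) * (a * y)) * s‖ ≤ ‖a‖ ^ 2 * ‖star s * η (star y * y) * s‖ := by
  have hle : star (a * y) * (a * y) ≤ ((‖a‖ ^ 2 : ℝ) : ℂ) • (star y * y) := by
    have := star_left_conjugate_le_conjugate
      (CStarAlgebra.star_mul_le_algebraMap_norm_sq (a := a)) y
    simpa only [Algebra.algebraMap_eq_smul_one, mul_smul_comm, smul_mul_assoc, mul_one, star_mul,
      mul_assoc, Complex.coe_smul] using this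
  have hconj := star_left_conjugate_le_conjugate (hη.monotone hle) s
  rw [map_smul, mul_smul_comm, smul_mul_assoc] at hconj
  refine (CStarAlgebra.norm_le_norm_of_nonneg_of_le
    (star_left_conjugate_nonneg (hη.map_nonneg (star_mul_self_nonneg _)) s) hconj).trans_eq ?_
  rw [norm_smul, Complex.norm_real, Real.norm_of_nonneg (sq_nonneg _)]

lemma norm_star_mul_apply_mul_mul_mul_sq_le (hη : IsTwoPositive η) (x a y : A) (r s : B) :
    ‖star r * η (x * a * y) * s‖ ^ 2 ≤
      ‖star r * η (x * star x) * r‖ * ‖star s * η (star y * y) * s‖ * ‖a‖ ^ 2 := calc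
  ‖star r * η (x * a * y) * s‖ ^ 2
  _ ≤ ‖star r * η (x * star x) * r‖ * ‖star s * η (star (a * y) * (a * y)) * s‖ := by
    rw [mul_assoc x]
    exact hη.norm_star_mul_apply_mul_sq_le x (a * y) r s
  _ ≤ ‖star r * η (x * star x) * r‖ * (‖a‖ ^ 2 * ‖star s * η (star y * y) * s‖) := by
    gcongr
    exact hη.norm_star_mul_apply_star_mul_self_mul_le a y s
  _ = _ := by ring

end CStarAlgebra

end IsTwoPositive

section Sandwich

open scoped CStarAlgebra

variable {A B : Type*} [CStarAlgebra A] [CStarAlgebra B]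

/-- The bounded operator `c ↦ η (x * ι c * y)` on `B`. For `x = (X - w₁)⁻¹` and `y = (X - w₂)⁻¹`
it is the difference quotient of `w ↦ η ((X - w)⁻¹)` at `(w₁, w₂)`. -/
def sandwich (ι : B →⋆ₐ[ℂ] A) (η : A →L[ℂ] B) (x y : A) : B →L[ℂ] B :=
  η ∘L ContinuousLinearMap.mulLeftRight ℂ A x y ∘L ⟨ι.toAlgHom.toLinearMap, map_continuous ι⟩

@[simp]
lemma sandwich_apply (ι : B →⋆ₐ[ℂ] A) (η : A →L[ℂ] B) (x y : A) (c : B) :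
    sandwich ι η x y c = η (x * ι c * y) := rfl

/-- Two-sided multiplication `c ↦ g * c * k` by units, as an invertible bounded operator. -/
@[simps]
def mulLeftRightUnits (𝕜 : Type*) {R : Type*} [NontriviallyNormedField 𝕜] [NormedRing R]
    [NormedAlgebra 𝕜 R] (g k : Rˣ) : (R →L[𝕜] R)ˣ where
  val := ContinuousLinearMap.mulLeftRight 𝕜 R g k
  inv := ContinuousLinearMap.mulLeftRight 𝕜 R ↑g⁻¹ ↑k⁻¹
  val_inv := by ext; simp [mul_assoc]
  inv_val := by ext; simp [mul_assoc]

variable [PartialOrder A] [StarOrderedRing A] [PartialOrder B] [StarOrderedRing B]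

lemma IsTwoPositive.norm_mulLeftRight_mul_sandwich_sq_le {η : A →L[ℂ] B} (hη : IsTwoPositive η)
    (ι : B →⋆ₐ[ℂ] A) (x y : A) (r s : B) :
    ‖ContinuousLinearMap.mulLeftRight ℂ B (star r) s * sandwich ι η x y‖ ^ 2 ≤
      ‖star r * η (x * star x) * r‖ * ‖star s * η (star y * y) * s‖ := by
  rw [← Real.le_sqrt (norm_nonneg _) (by positivity)]
  refine ContinuousLinearMap.opNorm_le_bound _ (Real.sqrt_nonneg _) fun c ↦ ?_
  rw [← sq_le_sq₀ (norm_nonneg _) (by positivity), mul_pow, Real.sq_sqrt (by positivity)]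
  refine (IsTwoPositive.norm_star_mul_apply_mul_mul_mul_sq_le (η := η.toLinearMap) hη
    x (ι c) y r s).trans ?_
  exact mul_le_mul_of_nonneg_left
    (pow_le_pow_left₀ (norm_nonneg _) (NonUnitalStarAlgHom.norm_apply_le ι c) 2) (by positivity)

lemma IsTwoPositive.spectrum_sandwich_subset_ball {η : A →L[ℂ] B} (hη : IsTwoPositive η)
    (ι : B →⋆ₐ[ℂ] A) {x y : A} {v₁ v₂ : B}
    (hv₁ : IsStrictlyPositive v₁) (hv₂ : IsStrictlyPositive v₂)
    (h₁ : IsStrictlyPositive (v₁ - η (x * ι v₁ * star x)))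
    (h₂ : IsStrictlyPositive (v₂ - η (star y * ι v₂ * y))) :
    spectrum ℂ (sandwich ι η x y) ⊆ Metric.ball 0 1 := by
  obtain ⟨g, rfl⟩ := exists_units_star_mul_self_eq hv₁
  obtain ⟨k, rfl⟩ := exists_units_star_mul_self_eq hv₂
  let S : (B →L[ℂ] B)ˣ := mulLeftRightUnits ℂ (star g) k
  let x' : A := x * ι (star g)
  let y' : A := ι k * y
  have hconj : ↑S⁻¹ * sandwich ι η x y * ↑S =
      ContinuousLinearMap.mulLeftRight ℂ B (star (↑g⁻¹ : B)) ↑k⁻¹ * sandwich ι η x' y' := by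
    ext c
    simp [S, x', y', mul_assoc, ← Units.coe_star_inv]
  have hx : x * ι (star ↑g * ↑g) * star x = x' * star x' := by
    simp [x', ← StarHomClass.map_star, mul_assoc]
  have hy : star y * ι (star ↑k * ↑k) * y = star y' * y' := by
    simp [y', ← StarHomClass.map_star, mul_assoc]
  rw [hx] at h₁
  rw [hy] at h₂
  have hlt₁ := norm_star_inv_mul_mul_inv_lt_one (hη.map_nonneg (mul_star_self_nonneg x')) h₁
  have hlt₂ := norm_star_inv_mul_mul_inv_lt_one (hη.map_nonneg (star_mul_self_nonneg y')) h₂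
  rw [← spectrum.units_conjugate' (u := S), hconj]
  refine spectrum_subset_ball_of_norm_lt_one ?_
  rw [← sq_lt_one_iff₀ (norm_nonneg _)]
  exact (hη.norm_mulLeftRight_mul_sandwich_sq_le ι x' y' _ _).trans_lt
    (mul_lt_one_of_nonneg_of_lt_one_left (norm_nonneg _) hlt₁ hlt₂.le)

end Sandwich

section Subordination

lemma isUnit_sub_of_isStrictlyPositive_imaginaryPart {A : Type*} [CStarAlgebra A] [PartialOrder A]
    [StarOrderedRing A] {X w : A} (hX : IsSelfAdjoint X) (hw : IsStrictlyPositive (ℑ w : A)) :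
    IsUnit (X - w) := by
  rw [IsUnit.sub_iff]
  refine isUnit_of_isStrictlyPositive_imaginaryPart ?_
  rwa [map_sub, hX.imaginaryPart, sub_zero]

lemma IsTwoPositive.imaginaryPart_sub_apply_imaginaryPart {A B : Type*} [Ring A] [StarRing A]
    [Module ℂ A] [StarModule ℂ A] [NonUnitalRing B] [StarRing B] [Module ℂ B] [StarModule ℂ B]
    {η : A →ₗ[ℂ] B} (hη : IsTwoPositive η) {a₀ b w : B} {R : A} (ha₀ : IsSelfAdjoint a₀)
    (heq : w = b + a₀ + η R) : (ℑ w - η (ℑ R) : B) = ℑ b := by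
  rw [hη.map_imaginaryPart, heq]
  simp [ha₀.imaginaryPart]

lemma imaginaryPart_sub_map {A B : Type*} [Ring A] [StarRing A] [Algebra ℂ A] [StarModule ℂ A]
    [Ring B] [StarRing B] [Algebra ℂ B] [StarModule ℂ B] (ι : B →⋆ₐ[ℂ] A) {X : A}
    (hX : IsSelfAdjoint X) (w : B) : (ℑ (X - ι w) : A) = -ι (ℑ w) := by
  rw [map_imaginaryPart, map_sub, hX.imaginaryPart, zero_sub, NegMemClass.coe_neg]

variable {A B : Type*} [CStarAlgebra A] [PartialOrder A] [StarOrderedRing A]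
  [CStarAlgebra B] [PartialOrder B] [StarOrderedRing B]

lemma isStrictlyPositive_map_s5 (ι : B →⋆ₐ[ℂ] A) {v : B} (hv : IsStrictlyPositive v) :
    IsStrictlyPositive (ι v) :=
  (hv.isUnit.map ι).isStrictlyPositive (map_nonneg ι hv.nonneg)

lemma isUnit_sub_map_of_isStrictlyPositive_imaginaryPart (ι : B →⋆ₐ[ℂ] A) {X : A} {w : B}
    (hX : IsSelfAdjoint X) (hw : IsStrictlyPositive (ℑ w : B)) : IsUnit (X - ι w) := by
  refine isUnit_sub_of_isStrictlyPositive_imaginaryPart hX ?_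
  rw [← map_imaginaryPart]
  exact isStrictlyPositive_map_s5 ι hw

variable {η : A →ₗ[ℂ] B} {ι : B →⋆ₐ[ℂ] A} {X : A} {a₀ b w : B}

lemma IsTwoPositive.isStrictlyPositive_sub_apply_resolvent (hη : IsTwoPositive η)
    (hX : IsSelfAdjoint X) (ha₀ : IsSelfAdjoint a₀) (hb : IsStrictlyPositive (ℑ b : B))
    (hw : IsStrictlyPositive (ℑ w : B)) (heq : w = b + a₀ + η (Ring.inverse (X - ι w))) :
    IsStrictlyPositive (ℑ w -
      η (Ring.inverse (X - ι w) * ι (ℑ w) * star (Ring.inverse (X - ι w))) : B) := by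
  have hunit := isUnit_sub_map_of_isStrictlyPositive_imaginaryPart ι hX hw
  rwa [← hη.imaginaryPart_sub_apply_imaginaryPart ha₀ heq, imaginaryPart_ringInverse hunit,
    imaginaryPart_sub_map ι hX w, mul_neg, neg_mul, neg_neg] at hb

lemma IsTwoPositive.isStrictlyPositive_sub_apply_resolvent' (hη : IsTwoPositive η)
    (hX : IsSelfAdjoint X) (ha₀ : IsSelfAdjoint a₀) (hb : IsStrictlyPositive (ℑ b : B))
    (hw : IsStrictlyPositive (ℑ w : B)) (heq : w = b + a₀ + η (Ring.inverse (X - ι w))) :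
    IsStrictlyPositive (ℑ w -
      η (star (Ring.inverse (X - ι w)) * ι (ℑ w) * Ring.inverse (X - ι w)) : B) := by
  have hunit := isUnit_sub_map_of_isStrictlyPositive_imaginaryPart ι hX hw
  rwa [← hη.imaginaryPart_sub_apply_imaginaryPart ha₀ heq, imaginaryPart_ringInverse' hunit,
    imaginaryPart_sub_map ι hX w, mul_neg, neg_mul, neg_neg] at hb

end Subordination

theorem difference_quotient_spectrum_general
    {A B : Type*} [CStarAlgebra A] [PartialOrder A] [StarOrderedRing A]
    [CStarAlgebra B] [PartialOrder B] [StarOrderedRing B]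
    (ι : B →⋆ₐ[ℂ] A) (X : A) (hX : IsSelfAdjoint X) (a₀ : B) (ha₀ : IsSelfAdjoint a₀)
    (η : A →ₗ[ℂ] B) (hη : IsTwoPositive η) (b₁ b₂ w₁ w₂ : B)
    (hb₁ : SPos (imP b₁)) (hb₂ : SPos (imP b₂)) (hw₁ : SPos (imP w₁)) (hw₂ : SPos (imP w₂))
    (heq₁ : w₁ = b₁ + a₀ + η (Ring.inverse (X - ι w₁)))
    (heq₂ : w₂ = b₂ + a₀ + η (Ring.inverse (X - ι w₂))) :
    ∃ T : B →L[ℂ] B,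
      (∀ c : B, T c = c - η (Ring.inverse (X - ι w₁) * ι c * Ring.inverse (X - ι w₂))) ∧
      IsUnit T ∧
      spectrum ℂ T ⊆ Metric.ball (1 : ℂ) 1 ∧
      spectrum ℂ (Ring.inverse T) ⊆ {z : ℂ | 1 / 2 < z.re} := by
  rw [imP_eq_imaginaryPart_s5, sPos_iff_isStrictlyPositive] at hb₁ hb₂ hw₁ hw₂
  let T : B →L[ℂ] B := 1 -
    sandwich ι ⟨η, hη.continuous⟩ (Ring.inverse (X - ι w₁)) (Ring.inverse (X - ι w₂))
  have hT : spectrum ℂ T ⊆ Metric.ball 1 1 := spectrum_one_sub_subset_ball <|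
    IsTwoPositive.spectrum_sandwich_subset_ball hη ι hw₁ hw₂
      (hη.isStrictlyPositive_sub_apply_resolvent hX ha₀ hb₁ hw₁ heq₁)
      (hη.isStrictlyPositive_sub_apply_resolvent' hX ha₀ hb₂ hw₂ heq₂)
  exact ⟨T, fun _ ↦ rfl, isUnit_of_spectrum_subset_ball hT, hT,
    spectrum_ringInverse_subset_half_lt_re hT⟩

/-- Proposition 4.1, with 2-positivity: if `w₁, w₂` solve the subordination
equation at `b₁, b₂` (all with strictly positive imaginary parts), then the difference
quotient `ΔH(c) = c − η((X − w₁)⁻¹ c (X − w₂)⁻¹)` is an invertible bounded operator on `B`,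
its spectrum lies in the open disc of center 1 and radius 1, and the spectrum of its
inverse `Δω = (ΔH)⁻¹` lies in the half-plane `Re z > 1/2`. -/
theorem difference_quotient_spectrum
    {A B : Type*} [CStarAlgebra A] [PartialOrder A] [StarOrderedRing A]
    [CStarAlgebra B] [PartialOrder B] [StarOrderedRing B]
    (ι : B →⋆ₐ[ℂ] A) (hι : Function.Injective ι)
    (X : A) (hX : IsSelfAdjoint X)
    (a₀ : B) (ha₀ : IsSelfAdjoint a₀)
    (η : A →L[ℂ] B)
    (hη2 : ∀ p : Matrix (Fin 2) (Fin 2) A, (∃ y : Matrix (Fin 2) (Fin 2) A, p = star y * y) →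
      ∃ z : Matrix (Fin 2) (Fin 2) B, p.map ⇑η = star z * z)
    (b₁ b₂ w₁ w₂ : B)
    (hb₁ : SPos (imP b₁)) (hb₂ : SPos (imP b₂))
    (hw₁ : SPos (imP w₁)) (hw₂ : SPos (imP w₂))
    (heq₁ : w₁ = b₁ + a₀ + η (Ring.inverse (X - ι w₁)))
    (heq₂ : w₂ = b₂ + a₀ + η (Ring.inverse (X - ι w₂))) :
    ∃ T : B →L[ℂ] B,
      (∀ c : B, T c = c - η (Ring.inverse (X - ι w₁) * ι c * Ring.inverse (X - ι w₂))) ∧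
      IsUnit T ∧
      spectrum ℂ T ⊆ Metric.ball (1 : ℂ) 1 ∧
      spectrum ℂ (Ring.inverse T) ⊆ {z : ℂ | 1 / 2 < z.re} :=
  difference_quotient_spectrum_general ι X hX a₀ ha₀ η.toLinearMap hη2 b₁ b₂ w₁ w₂
    hb₁ hb₂ hw₁ hw₂ heq₁ heq₂
end
end
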